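/- As ν → 1⁻, Γ(ν) is asymptotic to (4π/log(1/ν))² · exp(−π²/log(1/ν)); i.e., the ratio of Γ(ν) to this expression tends to 1 as ν → 1⁻, where Γ(ν) = 1 + 8 Σ_{k=1}^{∞} (-1)^k k ν^k/(1+ν^k). -/

import Mathlib

/-!
The function `Γsuris ν = ϑ₄(0, ν)⁴` is a modular form of weight two, and its behaviour at the cusp
`ν → 1⁻` is read off from its behaviour at the opposite cusp. Concretely, let
`L q = ∑ n qⁿ / (1 - qⁿ)`, so that `E₂(τ) = 1 - 24 L(exp(2πiτ))` is the Eisenstein series of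
weight two. From
`x / (1 + x) = x / (1 - x) - 2 x² / (1 - x²)` and a splitting into even and odd indices,
`Γsuris ν = 1 - 8 L(ν) + 48 L(ν²) - 64 L(ν⁴)` (`Gamma_eq_lambert`).

The transformation of `E₂` under `τ ↦ -1/τ` (`lambert_transform`) relates `L(exp(-2πt))` to
`L(exp(-2π/t))`. With `s = log (1/ν) = 2πt` and `r = exp(-π²/s)`, the three terms become multiples
of `L(r⁴)`, `L(r²)` and `L(r)`, while the constants and the non-modular corrections of `E₂` cancel:
`Γsuris ν = (4π/s)² (2 L(r⁴) - 3 L(r²) + L(r))` (`Gamma_exp_neg`).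

As `ν → 1⁻` we have `r → 0⁺`, and `L(r) / r → 1` (`tendsto_lambert_div`), so `L(r)` dominates and
the stated asymptotics follow.
-/

open Real Filter

noncomputable def Γsuris (ν : ℝ) : ℝ :=
  1 + 8 * ∑' k : ℕ, (-1 : ℝ) ^ (k + 1) * (k + 1) * ν ^ (k + 1) / (1 + ν ^ (k + 1))

/-- The Lambert series `∑ n qⁿ / (1 - qⁿ)`; the term at `n = 0` vanishes, being `0 * 1 / 0`. -/
noncomputable def lambert (q : ℝ) : ℝ := ∑' n : ℕ, (n : ℝ) * q ^ n / (1 - q ^ n)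

lemma summable_lambert {q : ℝ} (h0 : 0 < q) (h1 : q < 1) :
    Summable fun n : ℕ => (n : ℝ) * q ^ n / (1 - q ^ n) := by
  have h : ‖q‖ < 1 := by rwa [Real.norm_of_nonneg h0.le]
  simpa using summable_norm_pow_mul_geometric_div_one_sub 1 h

lemma tsum_alternating {a : ℕ → ℝ} (ha : Summable a) :
    ∑' k, (-1 : ℝ) ^ k * a k = -∑' k, a k + 2 * ∑' k, a (2 * k) := by
  have he : Summable fun k => a (2 * k) :=
    ha.comp_injective (mul_right_injective₀ (two_ne_zero' ℕ))
  have ho : Summable fun k => a (2 * k + 1) :=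
    ha.comp_injective ((add_left_injective 1).comp (mul_right_injective₀ (two_ne_zero' ℕ)))
  rw [← tsum_even_add_odd he ho,
    ← tsum_even_add_odd (f := fun k => (-1 : ℝ) ^ k * a k) (by simpa using he)
      (by simpa [pow_succ] using ho.neg)]
  have e (k : ℕ) : (-1 : ℝ) ^ (2 * k) = 1 := by simp [pow_mul]
  simp only [pow_succ, e, one_mul, mul_neg, mul_one, neg_mul, tsum_neg]
  ring

lemma Gamma_eq_lambert {q : ℝ} (h0 : 0 < q) (h1 : q < 1) :
    Γsuris q = 1 - 8 * lambert q + 48 * lambert (q ^ 2) - 64 * lambert (q ^ 4) := by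
  have s1 := summable_lambert h0 h1
  have s2 := summable_lambert (pow_pos h0 2) (pow_lt_one₀ h0.le h1 two_ne_zero)
  have s4 := summable_lambert (pow_pos h0 4) (pow_lt_one₀ h0.le h1 four_ne_zero)
  set a : ℕ → ℝ := fun n => (n : ℝ) * q ^ n / (1 - q ^ n) -
    2 * ((n : ℝ) * (q ^ 2) ^ n / (1 - (q ^ 2) ^ n)) with ha
  have hsum : Summable a := s1.sub (s2.mul_left 2)
  have hterm (n : ℕ) : (-1 : ℝ) ^ n * n * q ^ n / (1 + q ^ n) = (-1) ^ n * a n := by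
    rcases eq_or_ne n 0 with rfl | hn
    · simp [ha]
    · have hp : 0 < q ^ n := pow_pos h0 n
      have hl : q ^ n < 1 := pow_lt_one₀ h0.le h1 hn
      have e : (q ^ 2) ^ n = (q ^ n) ^ 2 := by rw [← pow_mul, ← pow_mul, mul_comm]
      have n1 : 1 - q ^ n ≠ 0 := by linarith
      have n2 : 1 + q ^ n ≠ 0 := by linarith
      have e2 : 1 - (q ^ n) ^ 2 = (1 - q ^ n) * (1 + q ^ n) := by ring
      simp only [ha, e, e2]
      field_simp
      ring
  have hE : ∑' n, a (2 * n) = 2 * lambert (q ^ 2) - 4 * lambert (q ^ 4) := by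
    rw [lambert, lambert, ← tsum_mul_left, ← tsum_mul_left,
      ← (s2.mul_left 2).tsum_sub (s4.mul_left 4)]
    refine tsum_congr fun n => ?_
    simp only [ha, ← pow_mul, Nat.cast_mul, Nat.cast_ofNat]
    rw [show 2 * (2 * n) = 4 * n by ring]
    ring
  have hA : ∑' n, a n = lambert q - 2 * lambert (q ^ 2) := by
    rw [lambert, lambert, ← tsum_mul_left, ← s1.tsum_sub (s2.mul_left 2)]
  have hshift : ∑' k : ℕ, (-1 : ℝ) ^ (k + 1) * (k + 1) * q ^ (k + 1) / (1 + q ^ (k + 1)) =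
      ∑' n, (-1 : ℝ) ^ n * a n := by
    have hs : Summable fun n => (-1 : ℝ) ^ n * a n :=
      .of_norm (by simpa using hsum.norm)
    rw [hs.tsum_eq_zero_add, ← hterm 0]
    simp only [← hterm]
    simp
  rw [Γsuris, hshift, tsum_alternating hsum, hE, hA]
  ring

open EisensteinSeries in
lemma E2_mul_I {t : ℝ} (ht : 0 < t) (z : UpperHalfPlane) (hz : (z : ℂ) = t * Complex.I) :
    E2 z = ((1 - 24 * lambert (Real.exp (-(2 * π * t))) : ℝ) : ℂ) := by
  set q := Real.exp (-(2 * π * t)) with hq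
  have hq1 : q < 1 := by rw [hq, Real.exp_lt_one_iff]; have := pi_pos; nlinarith [mul_pos this ht]
  have hexp : Complex.exp (2 * π * Complex.I * z) = (q : ℂ) := by
    rw [hz, hq, Complex.ofReal_exp]
    congr 1
    push_cast
    linear_combination (2 * π * t : ℂ) * Complex.I_sq
  have hn : ‖(q : ℂ)‖ < 1 := by
    rwa [Complex.norm_real, Real.norm_of_nonneg (Real.exp_pos _).le]
  rw [E2_eq_tsum_cexp, hexp, ← tsum_pow_div_one_sub_eq_tsum_sigma hn]
  have hs := summable_norm_pow_mul_geometric_div_one_sub 1 hn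
  rw [tsum_pnat_eq_tsum_succ (f := fun n : ℕ => (n : ℂ) ^ 1 * (q : ℂ) ^ n / (1 - (q : ℂ) ^ n))]
  have := hs.tsum_eq_zero_add
  simp only [pow_one, Nat.cast_zero, zero_mul, zero_div, zero_add] at this
  simp only [pow_one]
  rw [← this, lambert]
  push_cast
  rfl

open EisensteinSeries in
/-- The quasi-modularity of `E₂` under `τ ↦ -1/τ`, on the imaginary axis. -/
lemma lambert_transform {t : ℝ} (ht : 0 < t) :
    1 - 24 * lambert (Real.exp (-(2 * π * t))) =
      -(1 - 24 * lambert (Real.exp (-(2 * π / t)))) / t ^ 2 + 6 / (π * t) := by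
  let z : UpperHalfPlane := ⟨t * Complex.I, by simpa using ht⟩
  have hz : (z : ℂ) = t * Complex.I := rfl
  have htc : (t : ℂ) ≠ 0 := by exact_mod_cast ht.ne'
  have hS : ((ModularGroup.S • z : UpperHalfPlane) : ℂ) = ((1 / t : ℝ) : ℂ) * Complex.I := by
    rw [UpperHalfPlane.modular_S_smul, UpperHalfPlane.coe_mk, hz]
    push_cast
    field_simp
    simp
  have h1 := E2_mul_I ht z hz
  have h2 := E2_mul_I (one_div_pos.mpr ht) _ hS
  have h3 := G2_S_transform z
  have hpi : (π : ℂ) ≠ 0 := by exact_mod_cast pi_ne_zero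
  have hG (w : UpperHalfPlane) : G2 w = (π ^ 2 / 3 : ℂ) * E2 w := by
    simp only [E2, Pi.smul_apply, smul_eq_mul, riemannZeta_two]
    field_simp
    ring
  rw [hG, hG, h1, h2, hz, mul_one_div] at h3
  have key : ((1 - 24 * lambert (Real.exp (-(2 * π * t))) : ℝ) : ℂ) =
      ((-(1 - 24 * lambert (Real.exp (-(2 * π / t)))) / t ^ 2 + 6 / (π * t) : ℝ) : ℂ) := by
    have hI : Complex.I ≠ 0 := Complex.I_ne_zero
    rw [mul_pow, Complex.I_sq] at h3
    generalize lambert (Real.exp (-(2 * π * t))) = A at *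
    generalize lambert (Real.exp (-(2 * π / t))) = B at *
    push_cast at h3 ⊢
    field_simp at h3 ⊢
    linear_combination h3
  exact_mod_cast key

/-- The constant terms of the three Eisenstein series cancel, as do the corrections `6 / (π t)`. -/
lemma Gamma_exp_neg {s : ℝ} (hs : 0 < s) :
    Γsuris (Real.exp (-s)) = (4 * π / s) ^ 2 *
      (2 * lambert (Real.exp (-π ^ 2 / s) ^ 4) - 3 * lambert (Real.exp (-π ^ 2 / s) ^ 2) +
        lambert (Real.exp (-π ^ 2 / s))) := by
  have hp := pi_pos
  rw [Gamma_eq_lambert (Real.exp_pos _) (by simpa using hs)]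
  simp only [← Real.exp_nat_mul]
  have h (c : ℝ) (hc : 0 < c) := lambert_transform (t := c * (s / (2 * π))) (by positivity)
  have h1 := h 1 one_pos
  have h2 := h 2 two_pos
  have h4 := h 4 four_pos
  rw [show -(2 * π * (1 * (s / (2 * π)))) = -s by field_simp,
    show -(2 * π / (1 * (s / (2 * π)))) = (4 : ℕ) * (-π ^ 2 / s) by push_cast; field_simp; norm_num]
    at h1
  rw [show -(2 * π * (2 * (s / (2 * π)))) = (2 : ℕ) * -s by push_cast; field_simp,
    show -(2 * π / (2 * (s / (2 * π)))) = (2 : ℕ) * (-π ^ 2 / s) by push_cast; field_simp] at h2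
  rw [show -(2 * π * (4 * (s / (2 * π)))) = (4 : ℕ) * -s by push_cast; field_simp,
    show -(2 * π / (4 * (s / (2 * π)))) = -π ^ 2 / s by field_simp; norm_num] at h4
  generalize lambert (Real.exp _) = A1 at *
  generalize lambert (Real.exp _) = A2 at *
  generalize lambert (Real.exp _) = A3 at *
  generalize lambert (Real.exp _) = A4 at *
  generalize lambert (Real.exp _) = A5 at *
  generalize lambert (Real.exp _) = A6 at *
  field_simp at h1 h2 h4 ⊢
  linarith

lemma tendsto_lambert_div :
    Tendsto (fun r => lambert r / r) (nhdsWithin 0 (Set.Ioi 0)) (nhds 1) := by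
  have hev : ∀ᶠ r : ℝ in nhdsWithin 0 (Set.Ioi 0), 0 < r ∧ r < 1 / 2 :=
    Ioo_mem_nhdsGT (by norm_num)
  have hlim : Tendsto (fun r : ℝ => ∑' n : ℕ, ((n : ℝ) + 1) * r ^ n / (1 - r ^ (n + 1)))
      (nhdsWithin 0 (Set.Ioi 0)) (nhds (∑' n : ℕ, if n = 0 then 1 else 0)) := by
    refine tendsto_tsum_of_dominated_convergence
      (bound := fun n : ℕ => 2 * (((n : ℝ) + 1) * (1 / 2) ^ n)) ?_ ?_ ?_
    · refine Summable.mul_left 2 ?_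
      have a := summable_pow_mul_geometric_of_norm_lt_one 1 (r := (1 / 2 : ℝ)) (by norm_num)
      have b := summable_geometric_of_norm_lt_one (x := (1 / 2 : ℝ)) (by norm_num)
      simpa [add_mul] using a.add b
    · intro n
      have hc : ContinuousAt (fun r : ℝ => ((n : ℝ) + 1) * r ^ n / (1 - r ^ (n + 1))) 0 :=
        ContinuousAt.div (by fun_prop) (by fun_prop) (by simp)
      have := hc.tendsto.mono_left (nhdsWithin_le_nhds (s := Set.Ioi 0))
      rcases eq_or_ne n 0 with rfl | hn
      · simpa using this
      · simpa [hn] using this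
    · filter_upwards [hev] with r ⟨h0, h1⟩ n
      have hle : r ^ (n + 1) ≤ 1 / 2 :=
        (pow_le_of_le_one h0.le (by linarith) n.succ_ne_zero).trans h1.le
      have hpow : r ^ n ≤ (1 / 2) ^ n := pow_le_pow_left₀ h0.le h1.le n
      have hp : 0 < r ^ n := pow_pos h0 n
      rw [Real.norm_of_nonneg (div_nonneg (by positivity) (by linarith)),
        div_le_iff₀ (by linarith)]
      have h3 : ((n : ℝ) + 1) * r ^ n ≤ ((n : ℝ) + 1) * (1 / 2) ^ n := by gcongr
      have h4 : 0 ≤ ((n : ℝ) + 1) * (1 / 2) ^ n := by positivity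
      nlinarith
  rw [tsum_ite_eq] at hlim
  refine hlim.congr' ?_
  filter_upwards [hev] with r ⟨h0, h1⟩
  rw [lambert, (summable_lambert h0 (by linarith)).tsum_eq_zero_add]
  simp only [Nat.cast_zero, zero_mul, zero_div, zero_add, ← tsum_div_const]
  refine tsum_congr fun n => ?_
  push_cast
  rw [eq_div_iff h0.ne']
  ring

theorem Gamma_asymptotic :
    Tendsto (fun ν : ℝ => Γsuris ν /
        ((4 * π / Real.log (1 / ν)) ^ 2 * Real.exp (-π ^ 2 / Real.log (1 / ν))))
      (nhdsWithin 1 (Set.Iio 1)) (nhds 1) := by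
  have hev : ∀ᶠ ν : ℝ in nhdsWithin 1 (Set.Iio 1), 0 < ν ∧ ν < 1 :=
    Ioo_mem_nhdsLT one_pos
  have hs : Tendsto (fun ν : ℝ => Real.log (1 / ν)) (nhdsWithin 1 (Set.Iio 1))
      (nhdsWithin 0 (Set.Ioi 0)) := by
    refine tendsto_nhdsWithin_iff.mpr ⟨?_, ?_⟩
    · have : ContinuousAt (fun ν : ℝ => Real.log (1 / ν)) 1 :=
        ContinuousAt.log (by fun_prop (disch := simp)) (by simp)
      simpa using this.tendsto.mono_left (nhdsWithin_le_nhds (s := Set.Iio 1))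
    · filter_upwards [hev] with ν ⟨h0, h1⟩
      exact Real.log_pos (one_lt_one_div h0 h1)
  have hr : Tendsto (fun ν : ℝ => Real.exp (-π ^ 2 / Real.log (1 / ν)))
      (nhdsWithin 1 (Set.Iio 1)) (nhdsWithin 0 (Set.Ioi 0)) := by
    refine tendsto_nhdsWithin_iff.mpr ⟨?_, .of_forall fun ν => Real.exp_pos _⟩
    refine Real.tendsto_exp_atBot.comp ?_
    simp only [div_eq_mul_inv]
    have := (tendsto_inv_nhdsGT_zero.comp hs).const_mul_atTop_of_neg
      (show -π ^ 2 < 0 by have := pi_pos; simp; positivity)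
    simpa using this
  have hpow (n : ℕ) (hn : n ≠ 0) : Tendsto (fun r : ℝ => r ^ n) (nhdsWithin 0 (Set.Ioi 0))
      (nhdsWithin 0 (Set.Ioi 0)) := by
    refine tendsto_nhdsWithin_iff.mpr ⟨?_, ?_⟩
    · have := ((continuous_pow n).tendsto (0 : ℝ)).mono_left (nhdsWithin_le_nhds (s := Set.Ioi 0))
      simpa [hn] using this
    · filter_upwards [self_mem_nhdsWithin] with r hr using pow_pos (Set.mem_Ioi.mp hr) n
  have hid (n : ℕ) (hn : n ≠ 0) := tendsto_nhds_of_tendsto_nhdsWithin (hpow n hn)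
  have hM := tendsto_lambert_div
  -- `L(r⁴)/r = r³ · L(r⁴)/r⁴` and `L(r²)/r = r · L(r²)/r²` both tend to zero.
  have hlim := ((((hid 3 (by simp)).mul (hM.comp (hpow 4 (by simp)))).const_mul 2).sub
    (((hid 1 (by simp)).mul (hM.comp (hpow 2 (by simp)))).const_mul 3)).add hM
  have hfin := hlim.comp hr
  simp only [zero_mul, mul_zero, sub_zero, zero_add] at hfin
  refine hfin.congr' ?_
  filter_upwards [hev] with ν ⟨h0, h1⟩
  have hpos : 0 < Real.log (1 / ν) := Real.log_pos (one_lt_one_div h0 h1)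
  have hν : Γsuris ν = Γsuris (Real.exp (-Real.log (1 / ν))) := by
    rw [one_div, Real.log_inv, neg_neg, Real.exp_log h0]
  rw [hν, Gamma_exp_neg hpos]
  have hpi := pi_pos
  have hrpos := Real.exp_pos (-π ^ 2 / Real.log (1 / ν))
  simp only [Function.comp_apply]
  generalize Real.exp (-π ^ 2 / Real.log (1 / ν)) = r at *
  generalize Real.log (1 / ν) = s at *
  field_simp
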